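/- Let X be a separable Hilbert space and f(z) = ∑_{k≥1} a_k z^{n_k} ∈ H²(𝔻, X) a lacunary series which is not a polynomial (infinitely many a_k are nonzero), such that the normalized sequence (a_k/‖a_k‖)_{k : a_k ≠ 0} is relatively compact in X. Then there exists a nonzero element x ∈ X such that for every N ≥ 0 the closed subspace H² ⊗ x = {g ∈ H²(𝔻, X) : ĝ(n) ∈ ℂx for all n ≥ 0} is contained in E_{S*^N f}. -/

import Mathlib

open scoped InnerProductSpace ENNReal
noncomputable section

/-- The Hardy space `H²(𝔻, X)` identified with `ℓ²(ℕ, X)`. -/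
abbrev H2 (X : Type*) [NormedAddCommGroup X] [InnerProductSpace ℂ X] : Type _ :=
  lp (fun _ : ℕ => X) 2

variable {X : Type*} [NormedAddCommGroup X] [InnerProductSpace ℂ X]

/-- The backward shift `S*` on `H²(𝔻, X)`. -/
def bshift (f : H2 X) : H2 X :=
  ⟨fun n => f (n + 1), by
    have h : Summable fun n : ℕ => ‖f n‖ ^ (2 : ℝ≥0∞).toReal :=
      (memℓp_gen_iff (by norm_num)).1 (lp.memℓp f)
    exact memℓp_gen ((summable_nat_add_iff 1).2 h)⟩

/-- `E_F`: the smallest closed `S*`-invariant subspace containing the family `F`. -/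
def EF (F : Set (H2 X)) : Submodule ℂ (H2 X) :=
  (Submodule.span ℂ {g : H2 X | ∃ f ∈ F, ∃ n : ℕ, g = bshift^[n] f}).topologicalClosure

/-- `E_f` for a single function. -/
def Ef (f : H2 X) : Submodule ℂ (H2 X) :=
  EF {f}

/-- `X_*(F) = ⋂_m closed-span {f̂(k) : k ≥ m, f ∈ F}`. -/
def XstarF (F : Set (H2 X)) : Submodule ℂ X :=
  ⨅ m : ℕ, (Submodule.span ℂ {x : X | ∃ f ∈ F, ∃ k ≥ m, x = f k}).topologicalClosure

def Xstar (f : H2 X) : Submodule ℂ X := XstarF {f}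

/-- `P : X → X` is an orthogonal projection: idempotent and self-adjoint. -/
def IsOrthoProj {Y : Type*} [NormedAddCommGroup Y] [InnerProductSpace ℂ Y]
    (P : Y →L[ℂ] Y) : Prop :=
  (∀ x, P (P x) = P x) ∧ ∀ x y, ⟪P x, y⟫_ℂ = ⟪x, P y⟫_ℂ

/-- A sequence in a Hilbert space is completely relatively compact if for every orthogonal
projection `P` the normalized sequence `{P aₖ / ‖P aₖ‖ : P aₖ ≠ 0}` is relatively compact. -/
def CRC {Y : Type*} [NormedAddCommGroup Y] [InnerProductSpace ℂ Y] (a : ℕ → Y) : Prop :=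
  ∀ P : Y →L[ℂ] Y, IsOrthoProj P →
    IsCompact (closure {v : Y | ∃ k, P (a k) ≠ 0 ∧ v = ‖P (a k)‖⁻¹ • P (a k)})

/-- A subset of `ℕ` is Hadamard lacunary. -/
def HadLac (Λ : Set ℕ) : Prop :=
  ∃ d : ℝ, 1 < d ∧ ∀ m ∈ Λ, ∀ n ∈ Λ, m < n → d * m ≤ n

/-- The Fourier spectrum. -/
def spec (f : H2 X) : Set ℕ := {k : ℕ | f k ≠ 0}

/-- `H²(𝔻, Y)` for a subspace `Y ⊆ X`, as a submodule of `H²(𝔻, X)`. -/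
def H2sub (Y : Submodule ℂ X) : Submodule ℂ (H2 X) where
  carrier := {g : H2 X | ∀ n, g n ∈ Y}
  add_mem' := by
    intro a b ha hb n
    have : (↑(a + b) : ∀ _ : ℕ, X) n = a n + b n := by
      rw [lp.coeFn_add]; rfl
    rw [this]
    exact Y.add_mem (ha n) (hb n)
  zero_mem' := by
    intro n
    have : (↑(0 : H2 X) : ∀ _ : ℕ, X) n = 0 := by rw [lp.coeFn_zero]; rfl
    rw [this]
    exact Y.zero_mem
  smul_mem' := by
    intro c a ha n
    have : (↑(c • a) : ∀ _ : ℕ, X) n = c • a n := by rw [lp.coeFn_smul]; rfl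
    rw [this]
    exact Y.smul_mem c (ha n)

/-- A polynomial: finitely many nonzero Taylor coefficients. -/
def PolyH2 (f : H2 X) : Prop := {n : ℕ | f n ≠ 0}.Finite



lemma lac_pow_le {Λ : Set ℕ} {d : ℝ} (hd : 1 < d)
    (h : ∀ m ∈ Λ, ∀ n ∈ Λ, m < n → d * m ≤ n) (p : ℝ) (F : Finset ℕ) :
    (∀ n ∈ F, n ∈ Λ ∧ p ≤ n) → ∀ n ∈ Λ, p ≤ (n : ℝ) → (∀ m ∈ F, m < n) →
      d ^ F.card * p ≤ n := by
  induction F using Finset.induction_on_max with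
  | empty => intro _ n _ hp _; simpa using hp
  | insert a s hlt ih =>
    intro hF n hn hp hmax
    have ha := hF a (Finset.mem_insert_self _ _)
    have h1 := ih (fun k hk => hF k (Finset.mem_insert_of_mem hk)) a ha.1 ha.2 hlt
    have h2 := h a ha.1 n hn (hmax a (Finset.mem_insert_self _ _))
    have hnot : a ∉ s := fun hk => lt_irrefl _ (hlt a hk)
    rw [Finset.card_insert_of_notMem hnot, pow_succ]
    nlinarith

lemma lac_count {Λ : Set ℕ} (h : HadLac Λ) :
    ∃ R : ℕ, ∀ s : ℕ, ∀ F : Finset ℕ, (∀ n ∈ F, n ∈ Λ ∧ n + 1 + s ∈ Λ) → F.card ≤ R := by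
  obtain ⟨d, hd, h⟩ := h
  obtain ⟨R, hR⟩ := pow_unbounded_of_one_lt (d / (d - 1)) hd
  refine ⟨R, fun s F hF => ?_⟩
  by_contra hcon
  push Not at hcon
  have hne : F.Nonempty := Finset.card_pos.1 (by omega)
  set M := F.max' hne with hM
  have hMF : M ∈ F := Finset.max'_mem _ _
  have hinj : Function.Injective (fun n : ℕ => n + 1 + s) := fun a b hab => by
    simp at hab; exact hab
  have key := lac_pow_le hd h ((1 + s : ℕ) : ℝ) ((F.erase M).image (fun n : ℕ => n + 1 + s))
    (by
      intro n hn
      obtain ⟨k, hk, rfl⟩ := Finset.mem_image.1 hn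
      refine ⟨(hF k (Finset.mem_of_mem_erase hk)).2, ?_⟩
      exact_mod_cast (by omega : 1 + s ≤ k + 1 + s))
    (M + 1 + s) (hF M hMF).2 (by exact_mod_cast (by omega : 1 + s ≤ M + 1 + s))
    (by
      intro n hn
      obtain ⟨k, hk, rfl⟩ := Finset.mem_image.1 hn
      have := Finset.lt_max'_of_mem_erase_max' F hne hk
      omega)
  rw [Finset.card_image_of_injective _ hinj, Finset.card_erase_of_mem hMF] at key
  have h3 := h M (hF M hMF).1 _ (hF M hMF).2 (by omega)
  have h4 : d ^ R ≤ d ^ (F.card - 1) := pow_le_pow_right₀ hd.le (by omega)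
  have hd1 : 0 < d - 1 := by linarith
  rw [div_lt_iff₀ hd1] at hR
  push_cast at key h3
  have hs : (0 : ℝ) < 1 + s := by positivity
  have h5 : d ^ R * (1 + s) ≤ M + 1 + s := le_trans (by gcongr) key
  have h6 : d * (1 + s) < d ^ R * (d - 1) * (1 + s) := by gcongr
  nlinarith

lemma not_summable_ratio {b : ℕ → ℝ} (hb : ∀ n, 0 ≤ b n) (hs : Summable b)
    (hr : ∀ n, 0 < ∑' j, b (n + 1 + j)) :
    ¬ Summable (fun n => b n / ∑' j, b (n + 1 + j)) := by
  intro hsum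
  have ht := tendsto_sum_nat_add (fun n => b n / ∑' j, b (n + 1 + j))
  obtain ⟨M, hM⟩ := (ht.eventually (gt_mem_nhds (show (0 : ℝ) < 1 / 2 by norm_num))).exists
  have hsh : ∀ k, Summable fun j => b (k + j) := fun k => by
    simpa [add_comm] using (summable_nat_add_iff k).2 hs
  set ρ := ∑' j, b (M + j) with hρ
  have hle : ∀ n, M ≤ n → ∑' j, b (n + 1 + j) ≤ ρ := by
    intro n hn
    have := (hsh M).sum_add_tsum_nat_add (n + 1 - M)
    have h2 : (fun j => b (M + (j + (n + 1 - M)))) = fun j => b (n + 1 + j) := by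
      funext j; congr 1; omega
    rw [h2] at this
    rw [hρ, ← this]
    have : 0 ≤ ∑ i ∈ Finset.range (n + 1 - M), b (M + i) := Finset.sum_nonneg fun i _ => hb _
    linarith
  have hρ0 : 0 < ρ := lt_of_lt_of_le (hr M) (hle M le_rfl)
  have hS := (summable_nat_add_iff M).2 hsum
  have hfin : ρ ≤ ρ * ∑' k, (b (k + M) / ∑' j, b (k + M + 1 + j)) := by
    rw [← tsum_mul_left]
    refine (hsh M).tsum_le_tsum (fun k => ?_) (hS.mul_left ρ)
    rw [add_comm M k, mul_div_assoc', le_div_iff₀ (hr _), mul_comm]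
    exact mul_le_mul_of_nonneg_right (hle _ (by omega)) (hb _)
  nlinarith

lemma bshift_iter (f : H2 X) (n i : ℕ) : (bshift^[n] f : H2 X) i = f (i + n) := by
  induction n generalizing f i with
  | zero => rfl
  | succ n ih =>
    rw [Function.iterate_succ_apply, ih]
    show f (i + n + 1) = _
    rfl

lemma h2_summable (f : H2 X) : Summable fun n : ℕ => ‖f n‖ ^ 2 := by
  have h : Summable fun n : ℕ => ‖f n‖ ^ (2 : ℝ≥0∞).toReal :=
    (memℓp_gen_iff (by norm_num)).1 (lp.memℓp f)
  simpa using h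

lemma exists_point {u : ℕ → X} {A : Set ℕ} {w : ℕ → ℝ} {K : Set X} (hK : IsCompact K)
    (hu : ∀ n ∈ A, u n ∈ K) (hw : ¬ Summable (A.indicator w)) (hw0 : ∀ n, 0 ≤ w n) :
    ∃ x ∈ K, ∀ ε > 0, ¬ Summable ((A ∩ {n | ‖u n - x‖ < ε}).indicator w) := by
  by_contra hcon
  push Not at hcon
  have mono : ∀ B C : Set ℕ, B ⊆ C → Summable (C.indicator w) → Summable (B.indicator w) :=
    fun B C hBC hC => Summable.of_nonneg_of_le (fun n => Set.indicator_nonneg (fun k _ => hw0 k) n)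
      (fun n => Set.indicator_le_indicator_of_subset hBC hw0 n) hC
  have := hK.induction_on (p := fun s => Summable ((A ∩ {n | u n ∈ s}).indicator w))
    (by simp [summable_zero])
    (fun s t hst ht => mono _ _ (Set.inter_subset_inter_right _ (fun n hn => hst hn)) ht)
    (fun s t hs ht => by
      refine Summable.of_nonneg_of_le (fun n => Set.indicator_nonneg (fun k _ => hw0 k) n)
        (fun n => ?_) (hs.add ht)
      have := hw0 n
      by_cases h1 : n ∈ A <;> by_cases h2 : u n ∈ s <;> by_cases h3 : u n ∈ t <;>
        simp [Set.indicator, h1, h2, h3, this])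
    (fun x hx => by
      obtain ⟨ε, hε, h⟩ := hcon x hx
      refine ⟨Metric.ball x ε, mem_nhdsWithin_of_mem_nhds (Metric.ball_mem_nhds x hε), ?_⟩
      refine mono _ _ (Set.inter_subset_inter_right _ ?_) h
      intro n hn
      exact mem_ball_iff_norm.1 hn)
  exact hw (mono _ _ (Set.subset_inter subset_rfl (fun n hn => hu n hn)) this)

open Classical in
/-- The main estimate. -/
lemma main_summable (f h : H2 X) (hlac : HadLac (spec f))
    (hr : ∀ n, 0 < ∑' j, ‖f (n + 1 + j)‖ ^ 2) (N m : ℕ)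
    (horth : ∀ k, N ≤ k → ⟪(bshift^[k] f : H2 X), h⟫_ℂ = 0) :
    Summable fun n => ‖⟪f n, h m⟫_ℂ‖ ^ 2 / ∑' j, ‖f (n + 1 + j)‖ ^ 2 := by
  obtain ⟨R, hR⟩ := lac_count hlac
  obtain ⟨d, hd, hl⟩ := hlac
  have hd1 : 0 < d - 1 := by linarith
  obtain ⟨n1, hn1⟩ := exists_nat_gt (d * m / (d - 1))
  rw [div_lt_iff₀ hd1] at hn1
  set n0 := N + m + n1 with hn0
  set p : ℕ → ℝ := fun n => ‖⟪f n, h m⟫_ℂ‖ ^ 2 / ∑' j, ‖f (n + 1 + j)‖ ^ 2 with hp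
  have hp0 : ∀ n, 0 ≤ p n := fun n => div_nonneg (by positivity) (hr n).le
  set χ : ℕ → ℕ → ℝ := fun n s => if n ∈ spec f ∧ n + 1 + s ∈ spec f then 1 else 0 with hχ
  have hχ0 : ∀ n s, 0 ≤ χ n s := fun n s => by simp only [hχ]; split_ifs <;> norm_num
  have hχ1 : ∀ n s, χ n s ≤ 1 := fun n s => by simp only [hχ]; split_ifs <;> norm_num
  have hfs : ∀ k, Summable fun j => ‖f (k + j)‖ ^ 2 := fun k => by
    simpa [add_comm] using (summable_nat_add_iff k).2 (h2_summable f)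
  have hhs : Summable fun s => ‖h (m + 1 + s)‖ ^ 2 := by
    simpa [add_comm] using (summable_nat_add_iff (m + 1)).2 (h2_summable h)
  have hqs : ∀ n, Summable fun s => χ n s * ‖h (m + 1 + s)‖ ^ 2 := fun n =>
    Summable.of_nonneg_of_le (fun s => mul_nonneg (hχ0 _ _) (by positivity))
      (fun s => mul_le_of_le_one_left (by positivity) (hχ1 _ _)) hhs
  have hpq : ∀ n, n0 ≤ n → p n ≤ ∑' s, χ n s * ‖h (m + 1 + s)‖ ^ 2 := by
    intro n hn
    by_cases hfn : f n = 0
    · have : p n = 0 := by simp [hp, hfn]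
      rw [this]
      exact tsum_nonneg fun s => mul_nonneg (hχ0 _ _) (by positivity)
    have hnm : m ≤ n := by omega
    rw [hp]
    simp only
    rw [div_le_iff₀ (hr n)]
    have hs := lp.hasSum_inner (𝕜 := ℂ) (bshift^[n - m] f) h
    rw [horth _ (by omega)] at hs
    have hz : ∀ i ∈ Finset.range m, ⟪(bshift^[n - m] f : H2 X) i, h i⟫_ℂ = 0 := by
      intro i hi
      rw [Finset.mem_range] at hi
      rw [bshift_iter]
      have : f (i + (n - m)) = 0 := by
        by_contra hne
        have h1 := hl (i + (n - m)) hne n hfn (by omega)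
        have h2 : ((i + (n - m) : ℕ) : ℝ) ≥ n - m := by
          push_cast [Nat.cast_sub hnm]; linarith [(Nat.cast_nonneg i : (0 : ℝ) ≤ i)]
        have h3 : (n1 : ℝ) ≤ n := by exact_mod_cast (by omega : n1 ≤ n)
        nlinarith
      rw [this, inner_zero_left]
    have hs2 := (hasSum_nat_add_iff' (m + 1)).2 hs
    rw [Finset.sum_range_succ, Finset.sum_eq_zero hz] at hs2
    have hmm : (bshift^[n - m] f : H2 X) m = f n := by
      rw [bshift_iter, show m + (n - m) = n by omega]
    rw [hmm, zero_add, zero_sub] at hs2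
    have hf2 : ∀ s, (bshift^[n - m] f : H2 X) (s + (m + 1)) = f (n + 1 + s) := fun s => by
      rw [bshift_iter, show s + (m + 1) + (n - m) = n + 1 + s by omega]
    simp only [hf2] at hs2
    have hlim := (hs2.norm.pow 2)
    rw [norm_neg] at hlim
    refine le_of_tendsto hlim (Filter.Eventually.of_forall fun T => ?_)
    have e1 : ‖∑ s ∈ T, ⟪f (n + 1 + s), h (s + (m + 1))⟫_ℂ‖
        ≤ ∑ s ∈ T, (χ n s * ‖h (m + 1 + s)‖) * ‖f (n + 1 + s)‖ := by
      refine (norm_sum_le _ _).trans (Finset.sum_le_sum fun s _ => ?_)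
      by_cases h0 : f (n + 1 + s) = 0
      · simp [h0]
      · have : χ n s = 1 := by simp only [hχ]; exact if_pos ⟨hfn, h0⟩
        rw [this, one_mul, add_comm s, mul_comm]
        exact norm_inner_le_norm _ _
    have e2 := Finset.sum_mul_sq_le_sq_mul_sq T (fun s => χ n s * ‖h (m + 1 + s)‖)
      (fun s => ‖f (n + 1 + s)‖)
    have e3 : ∑ s ∈ T, (χ n s * ‖h (m + 1 + s)‖) ^ 2 ≤ ∑' s, χ n s * ‖h (m + 1 + s)‖ ^ 2 := by
      refine le_trans (Finset.sum_le_sum fun s _ => ?_)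
        ((hqs n).sum_le_tsum T fun s _ => mul_nonneg (hχ0 _ _) (by positivity))
      rw [mul_pow]
      have : χ n s ^ 2 ≤ χ n s := by nlinarith [hχ0 n s, hχ1 n s]
      gcongr
    have e4 : ∑ s ∈ T, ‖f (n + 1 + s)‖ ^ 2 ≤ ∑' s, ‖f (n + 1 + s)‖ ^ 2 :=
      (hfs (n + 1)).sum_le_tsum T fun s _ => by positivity
    calc _ ≤ (∑ s ∈ T, (χ n s * ‖h (m + 1 + s)‖) * ‖f (n + 1 + s)‖) ^ 2 := by gcongr
      _ ≤ _ := e2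
      _ ≤ _ := mul_le_mul e3 e4 (Finset.sum_nonneg fun _ _ => by positivity)
          (tsum_nonneg fun s => mul_nonneg (hχ0 _ _) (by positivity))
  rw [← summable_nat_add_iff n0]
  refine summable_of_sum_le (c := R * ∑' s, ‖h (m + 1 + s)‖ ^ 2) (fun n => hp0 _) fun F => ?_
  calc ∑ k ∈ F, p (k + n0) ≤ ∑ k ∈ F, ∑' s, χ (k + n0) s * ‖h (m + 1 + s)‖ ^ 2 :=
        Finset.sum_le_sum fun k _ => hpq _ (by omega)
    _ = ∑' s, ∑ k ∈ F, χ (k + n0) s * ‖h (m + 1 + s)‖ ^ 2 :=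
        (Summable.tsum_finsetSum fun k _ => hqs _).symm
    _ ≤ ∑' s, R * ‖h (m + 1 + s)‖ ^ 2 := by
        refine Summable.tsum_le_tsum (fun s => ?_) (summable_sum fun k _ => hqs _) (hhs.mul_left _)
        rw [← Finset.sum_mul]
        gcongr
        simp only [hχ]
        rw [Finset.sum_boole]
        have := hR s ((F.filter fun k => k + n0 ∈ spec f ∧ k + n0 + 1 + s ∈ spec f).image (· + n0))
          (by
            intro n hn
            obtain ⟨k, hk, rfl⟩ := Finset.mem_image.1 hn
            exact (Finset.mem_filter.1 hk).2)
        rw [Finset.card_image_of_injective _ (add_left_injective n0)] at this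
        exact_mod_cast this
    _ = _ := tsum_mul_left

/-- A lacunary series in `H²(𝔻, X)` which is not a polynomial and whose normalized nonzero
coefficients form a relatively compact set admits a nonzero `x ∈ X` with
`H² ⊗ x ⊆ E_{S*^N f}` for all `N ≥ 0`. -/
theorem lacunary_exists_scalar_column {X : Type*} [NormedAddCommGroup X] [InnerProductSpace ℂ X] [CompleteSpace X]
    [TopologicalSpace.SeparableSpace X]
    (f : H2 X) (hlac : HadLac (spec f)) (hinf : (spec f).Infinite)
    (hcpt : IsCompact (closure {v : X | ∃ k : ℕ, f k ≠ 0 ∧ v = ‖f k‖⁻¹ • f k})) :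
    ∃ x : X, x ≠ 0 ∧
      ∀ N : ℕ, H2sub (Submodule.span ℂ {x}) ≤ Ef (bshift^[N] f) := by
  classical
  have hfs : ∀ k, Summable fun j => ‖f (k + j)‖ ^ 2 := fun k => by
    simpa [add_comm] using (summable_nat_add_iff k).2 (h2_summable f)
  have hr : ∀ n, 0 < ∑' j, ‖f (n + 1 + j)‖ ^ 2 := by
    intro n
    obtain ⟨k, hk, hnk⟩ := hinf.exists_gt n
    refine (hfs (n + 1)).tsum_pos (fun j => by positivity) (k - (n + 1)) ?_
    have : n + 1 + (k - (n + 1)) = k := by omega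
    rw [this]
    have : f k ≠ 0 := hk
    positivity
  set r : ℕ → ℝ := fun n => ∑' j, ‖f (n + 1 + j)‖ ^ 2 with hrdef
  set w : ℕ → ℝ := fun n => ‖f n‖ ^ 2 / r n with hw
  have hw0 : ∀ n, 0 ≤ w n := fun n => div_nonneg (by positivity) (hr n).le
  have hns : ¬ Summable w :=
    not_summable_ratio (b := fun n => ‖f n‖ ^ 2) (fun n => by positivity) (h2_summable f) hr
  have hind : (spec f).indicator w = w := by
    funext n
    by_cases hn : n ∈ spec f
    · simp [hn]
    · have : f n = 0 := by simpa [spec] using hn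
      simp [hn, hw, this]
  set u : ℕ → X := fun n => ‖f n‖⁻¹ • f n with hu
  obtain ⟨x, -, hx⟩ := exists_point (u := u) (A := spec f) (w := w) hcpt
    (fun n hn => subset_closure ⟨n, hn, rfl⟩) (by rwa [hind]) hw0
  refine ⟨x, ?_, fun N => ?_⟩
  · rintro rfl
    apply hx 1 one_pos
    have : (spec f ∩ {n | ‖u n - 0‖ < 1}) = ∅ := by
      ext n
      simp only [Set.mem_inter_iff, Set.mem_ofPred_eq, sub_zero, Set.mem_empty_iff_false, iff_false,
        not_and, not_lt]
      intro hn
      have hn' : f n ≠ 0 := hn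
      have : ‖f n‖ ≠ 0 := norm_ne_zero_iff.2 hn'
      simp [hu, norm_smul, this]
    rw [this]
    simp [summable_zero]
  · intro g hg
    rw [Ef, EF, ← Submodule.orthogonal_orthogonal_eq_closure, Submodule.mem_orthogonal]
    intro h hh
    rw [Submodule.mem_orthogonal] at hh
    have horth : ∀ k, N ≤ k → ⟪(bshift^[k] f : H2 X), h⟫_ℂ = 0 := by
      intro k hk
      refine hh _ (Submodule.subset_span ⟨_, rfl, k - N, ?_⟩)
      rw [← Function.iterate_add_apply]
      congr 2
      omega
    have hxm : ∀ m, ⟪h m, x⟫_ℂ = 0 := by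
      intro m
      by_contra hne
      have hpos : 0 < ‖⟪h m, x⟫_ℂ‖ := norm_pos_iff.2 hne
      set δ := ‖⟪h m, x⟫_ℂ‖ / 2 with hδ
      have hδ0 : 0 < δ := by positivity
      have hden : 0 < ‖h m‖ + 1 := by positivity
      apply hx (δ / (‖h m‖ + 1)) (by positivity)
      have hS := (main_summable f h hlac hr N m horth).mul_left (δ ^ 2)⁻¹
      refine Summable.of_nonneg_of_le (fun n => Set.indicator_nonneg (fun k _ => hw0 k) n)
        (fun n => ?_) hS
      by_cases hn : n ∈ spec f ∩ {n | ‖u n - x‖ < δ / (‖h m‖ + 1)}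
      · rw [Set.indicator_of_mem hn]
        obtain ⟨hn1, hn2⟩ := hn
        have hn1' : f n ≠ 0 := hn1
        have hnf : 0 < ‖f n‖ := norm_pos_iff.2 hn1'
        rw [Set.mem_ofPred_eq, lt_div_iff₀ hden] at hn2
        have h1 : ‖⟪h m, u n - x⟫_ℂ‖ ≤ δ := by
          refine (norm_inner_le_norm _ _).trans ?_
          nlinarith [norm_nonneg (u n - x)]
        have h2 : δ ≤ ‖⟪h m, u n⟫_ℂ‖ := by
          have e : ⟪h m, x⟫_ℂ = ⟪h m, u n⟫_ℂ - ⟪h m, u n - x⟫_ℂ := by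
            rw [inner_sub_right]; ring
          have := norm_sub_le (⟪h m, u n⟫_ℂ) (⟪h m, u n - x⟫_ℂ)
          rw [← e] at this
          linarith
        have h3 : ‖f n‖ * δ ≤ ‖⟪f n, h m⟫_ℂ‖ := by
          have e : f n = ((‖f n‖ : ℝ) : ℂ) • u n := by
            simp only [hu]
            rw [Complex.coe_smul, smul_smul, mul_inv_cancel₀ hnf.ne', one_smul]
          rw [norm_inner_symm]
          conv_rhs => rw [e, inner_smul_right, norm_mul]
          simp only [Complex.norm_real, norm_norm]
          gcongr
        rw [hw]
        simp only
        rw [inv_mul_eq_div, le_div_iff₀ (by positivity), div_mul_eq_mul_div, ← mul_pow]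
        have := (hr n).le
        gcongr
      · rw [Set.indicator_of_notMem hn]
        have := (hr n).le
        positivity
    rw [lp.inner_eq_tsum]
    have : ∀ i, ⟪h i, g i⟫_ℂ = 0 := by
      intro i
      obtain ⟨c, hc⟩ := Submodule.mem_span_singleton.1 (hg i)
      rw [← hc, inner_smul_right, hxm, mul_zero]
    simp [this]

end
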